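/- Let G = *_{i∈I} G_i be an amalgam over C, fix i₀ ∈ I and a subset R ⊆ G_{i₀} \ {1}. Then 1 ∉ NSS_G(R) if and only if there exists a normal subsemigroup P_j of G_j for each j ∈ I with R ⊆ P_{i₀}, 1 ∉ P_{i₀}, and P_j ∩ C = P_{j'} ∩ C for all j, j' ∈ I. -/

import Mathlib

/-- A normal subsemigroup of a group: closed under products and under conjugation by
all elements of the group. -/
def IsNormalSubsemigroup {G : Type*} [Group G] (P : Set G) : Prop :=
  (∀ x ∈ P, ∀ y ∈ P, x * y ∈ P) ∧ ∀ x ∈ P, ∀ g : G, g⁻¹ * x * g ∈ P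

/-- `nss G S`: the normal subsemigroup of `G` generated by `S`, i.e. all nonempty
finite products of conjugates of elements of `S`. -/
def nss (G : Type*) [Group G] (S : Set G) : Set G :=
  {x | ∃ l : List (G × G), l ≠ [] ∧ (∀ p ∈ l, p.1 ∈ S) ∧
    (l.map fun p => p.2⁻¹ * p.1 * p.2).prod = x}

/-!
Adjoining the identity to `P j` gives the positive cone of a bi-invariant preorder on `G j`, and
these preorders agree on the amalgamated subgroup. They are combined into a left-invariant preorder
on the amalgam, ball by ball for the syllable length: the ball of radius `n + 1` is the union over
`j` of the sets `G j * B`, where `B` is the ball of radius `n`, and for distinct `j` these sets meet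
only in `B`. The preorder on `B` induces a relation on each `G j * B`, and these relations generate
the preorder on the larger ball; normal forms show that it restricts to the given one on `B`.

The elements whose left multiplication increases every element of the amalgam form a normal
submonoid whose trace on `G j` is `P j ∪ {1}`. If `1` is a product of conjugates of elements of
`R`, then this submonoid contains `r⁻¹` for some `r ∈ R`; as `r ≠ 1`, both `r⁻¹` and `1` lie
in `P i₀`.
-/

open Monoid Monoid.PushoutI Relation

section Relation

variable {α : Type*}

theorem rel_of_transGen_of_trans_off {r s : α → α → Prop} {B : Set α}
    (htrans : ∀ x y z, y ∉ B → r x y → r y z → r x z)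
    (hrs : ∀ x y, x ∈ B → y ∈ B → r x y → s x y)
    (hrefl : ∀ x ∈ B, s x x) (hs : ∀ x y z, s x y → s y z → s x z)
    {x y : α} (h : TransGen r x y) (hx : x ∈ B) (hy : y ∈ B) : s x y := by
  -- A chain leaving `B` is remembered by its last point in `B` and a single step out of it.
  have key : (y ∈ B ∧ s x y) ∨ (y ∉ B ∧ ∃ z ∈ B, s x z ∧ r z y) := by
    clear hy
    have extend : ∀ {z y : α}, z ∈ B → s x z → r z y →
        (y ∈ B ∧ s x y) ∨ (y ∉ B ∧ ∃ z ∈ B, s x z ∧ r z y) := fun {z y} hz hxz hzy => by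
      by_cases hy : y ∈ B
      · exact .inl ⟨hy, hs _ _ _ hxz (hrs _ _ hz hy hzy)⟩
      · exact .inr ⟨hy, z, hz, hxz, hzy⟩
    induction h with
    | single hxy => exact extend hx (hrefl x hx) hxy
    | tail _ hyy' ih =>
      rcases ih with ⟨hy, hxy⟩ | ⟨hy, z, hz, hxz, hzy⟩
      · exact extend hy hxy hyy'
      · exact extend hz hxz (htrans _ _ _ hy hzy hyy')
  exact (key.resolve_right fun h => h.1 hy).2

theorem rel_of_transGen_exists {ι : Type*} {r : ι → α → α → Prop} {B : Set α} {S : ι → Set α}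
    (htrans : ∀ i x y z, r i x y → r i y z → r i x z)
    (hleft : ∀ i x y, r i x y → x ∈ S i) (hright : ∀ i x y, r i x y → y ∈ S i)
    (hS : ∀ i j x, i ≠ j → x ∈ S i → x ∈ S j → x ∈ B)
    (hB : ∀ i j x y, x ∈ B → y ∈ B → r i x y → r j x y)
    {x y : α} (h : TransGen (fun a b => ∃ i, r i a b) x y)
    {i : ι} (hx : x ∈ S i) (hy : y ∈ S i) : r i x y := by
  have key : (∃ j, r j x y) ∨ ∃ z ∈ B, ∃ j k, r j x z ∧ r k z y := by
    clear hy
    induction h with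
    | single hxy => exact .inl hxy
    | @tail y y' _ hyy' ih =>
      obtain ⟨l, hl⟩ := hyy'
      rcases ih with ⟨j, hj⟩ | ⟨z, hz, j, k, hj, hk⟩
      · rcases eq_or_ne j l with rfl | hjl
        · exact .inl ⟨j, htrans _ _ _ _ hj hl⟩
        · exact .inr ⟨y, hS _ _ _ hjl (hright _ _ _ hj) (hleft _ _ _ hl), j, l, hj, hl⟩
      · rcases eq_or_ne k l with rfl | hkl
        · exact .inr ⟨z, hz, j, k, hj, htrans _ _ _ _ hk hl⟩
        · have hyB := hS _ _ _ hkl (hright _ _ _ hk) (hleft _ _ _ hl)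
          exact .inr ⟨y, hyB, j, l, htrans _ _ _ _ hj (hB _ _ _ _ hz hyB hk), hl⟩
  have change_index {j : ι} {a b : α} (ha : a ∈ B ∨ a ∈ S i) (hb : b ∈ B ∨ b ∈ S i)
      (h : r j a b) : r i a b := by
    rcases eq_or_ne j i with rfl | hji
    · exact h
    · exact hB _ _ _ _ (ha.elim id (hS _ _ _ hji (hleft _ _ _ h)))
        (hb.elim id (hS _ _ _ hji (hright _ _ _ h))) h
  rcases key with ⟨j, hj⟩ | ⟨z, hz, j, k, hj, hk⟩
  · exact change_index (.inr hx) (.inr hy) hj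
  · exact htrans _ _ _ _ (change_index (.inr hx) (.inl hz) hj)
      (change_index (.inl hz) (.inr hy) hk)

end Relation

section SyllableLength

variable {ι : Type*} {G : ι → Type*} [∀ i, Group (G i)] {H : Type*} [Group H]
  {φ : ∀ i, H →* G i}

theorem length_toList_wordRcons {M : ι → Type*} [∀ i, Monoid (M i)]
    [∀ i, DecidableEq (M i)] {i : ι} (p : CoprodI.Word.Pair M i) :
    (CoprodI.Word.rcons p).toList.length =
      p.tail.toList.length + if p.head = 1 then 0 else 1 := by
  by_cases h : p.head = 1 <;> simp [CoprodI.Word.rcons, CoprodI.Word.cons, h]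

theorem fstIdx_wordRcons_eq_some_iff {M : ι → Type*} [∀ i, Monoid (M i)]
    [∀ i, DecidableEq (M i)] {i : ι} (p : CoprodI.Word.Pair M i) :
    (CoprodI.Word.rcons p).fstIdx = some i ↔ p.head ≠ 1 := by
  by_cases h : p.head = 1 <;> simp [CoprodI.Word.rcons, h, p.fstIdx_ne]

variable {d : NormalWord.Transversal φ}

open Classical in
theorem length_toList_normalWordRcons {i : ι} (p : NormalWord.Pair d i) :
    (NormalWord.rcons i p).toList.length =
      p.tail.toList.length + if p.head ∈ (φ i).range then 0 else 1 := by
  have hhead := Subgroup.IsComplement.coe_equiv_snd_eq_one_iff_mem (g := p.head) (d.compl i)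
    (d.one_mem i)
  simp only [← SetLike.mem_coe, ← hhead]
  simpa only [NormalWord.rcons, CoprodI.Word.equivPair_symm] using length_toList_wordRcons
    { p.toPair with head := ((Subgroup.IsComplement.equiv (d.compl i) p.head).2 : G i) }

open Classical in
theorem fstIdx_normalWordRcons_eq_some_iff {i : ι} (p : NormalWord.Pair d i) :
    (NormalWord.rcons i p).fstIdx = some i ↔ p.head ∉ (φ i).range := by
  have hhead := Subgroup.IsComplement.coe_equiv_snd_eq_one_iff_mem (g := p.head) (d.compl i)
    (d.one_mem i)
  simp only [← SetLike.mem_coe, ← hhead]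
  simpa only [NormalWord.rcons, CoprodI.Word.equivPair_symm] using fstIdx_wordRcons_eq_some_iff
    { p.toPair with head := ((Subgroup.IsComplement.equiv (d.compl i) p.head).2 : G i) }

variable (d)

open Classical in
/-- The number of syllables in the normal form of an element of an amalgamated free product;
the elements of the amalgamated subgroup have length `0`. -/
noncomputable def syllableLength (x : PushoutI φ) : ℕ :=
  (NormalWord.equiv (d := d) x).toList.length

open Classical in
/-- The normal form of `x`, split as an element of `G j` (possibly trivial) followed by a word
that does not begin with a syllable from `G j`. -/
noncomputable def factorPair (j : ι) (x : PushoutI φ) : NormalWord.Pair d j :=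
  NormalWord.equivPair j (NormalWord.equiv x)

open Classical in
theorem rcons_factorPair (j : ι) (x : PushoutI φ) :
    NormalWord.rcons j (factorPair d j x) = NormalWord.equiv x :=
  (NormalWord.equivPair j).symm_apply_apply (NormalWord.equiv x)

open Classical in
theorem equiv_of_mul (j : ι) (g : G j) (x : PushoutI φ) :
    NormalWord.equiv (d := d) (of j g * x) = NormalWord.rcons j
      { factorPair d j x with head := g * (factorPair d j x).head } := by
  change (of j g * x) • (NormalWord.empty : NormalWord d) = _
  rw [mul_smul, NormalWord.summand_smul_def]
  rfl

open Classical in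
theorem syllableLength_of_mul (j : ι) (g : G j) (x : PushoutI φ) :
    syllableLength d (of j g * x) = (factorPair d j x).tail.toList.length +
      if g * (factorPair d j x).head ∈ (φ j).range then 0 else 1 := by
  rw [syllableLength, equiv_of_mul, length_toList_normalWordRcons]

open Classical in
theorem syllableLength_eq (j : ι) (x : PushoutI φ) :
    syllableLength d x = (factorPair d j x).tail.toList.length +
      if (factorPair d j x).head ∈ (φ j).range then 0 else 1 := by
  simpa using syllableLength_of_mul d j 1 x

open Classical in
theorem fstIdx_equiv_eq_some_iff (j : ι) (x : PushoutI φ) :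
    (NormalWord.equiv (d := d) x).fstIdx = some j ↔
      (factorPair d j x).head ∉ (φ j).range := by
  rw [← fstIdx_normalWordRcons_eq_some_iff, rcons_factorPair]

theorem syllableLength_eq_zero_iff (x : PushoutI φ) :
    syllableLength d x = 0 ↔ x ∈ (base φ).range := by
  classical
  constructor
  · intro hx
    have hword : (NormalWord.equiv (d := d) x).toWord = CoprodI.Word.empty :=
      CoprodI.Word.ext (List.eq_nil_of_length_eq_zero hx)
    have hprod : (NormalWord.equiv (d := d) x).prod = x := NormalWord.equiv.symm_apply_apply x
    rw [NormalWord.prod, hword, CoprodI.Word.prod_empty, map_one, mul_one] at hprod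
    exact ⟨_, hprod⟩
  · rintro ⟨h, rfl⟩
    change (base φ h • (NormalWord.empty : NormalWord d)).toList.length = 0
    rw [NormalWord.base_smul_def]
    rfl

theorem syllableLength_one : syllableLength d 1 = 0 :=
  (syllableLength_eq_zero_iff d 1).2 (one_mem _)

theorem syllableLength_of_mul_le (j : ι) (g : G j) (x : PushoutI φ) :
    syllableLength d (of j g * x) ≤ syllableLength d x + 1 := by
  rw [syllableLength_of_mul, syllableLength_eq d j x]
  split_ifs <;> omega

theorem syllableLength_of_map_mul (j : ι) (c : H) (x : PushoutI φ) :
    syllableLength d (of j (φ j c) * x) = syllableLength d x := by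
  rw [syllableLength_of_mul, syllableLength_eq d j x,
    Subgroup.mul_mem_cancel_left _ (MonoidHom.mem_range.2 ⟨c, rfl⟩)]

variable {d} {n : ℕ} {j : ι} {x : PushoutI φ}

theorem syllableLength_of_mul_le_of_notMem_range {g : G j} (hg : g ∉ (φ j).range)
    (hx : syllableLength d x ≤ n) (hgx : syllableLength d (of j g * x) ≤ n) (a : G j) :
    syllableLength d (of j a * x) ≤ n := by
  rw [syllableLength_eq d j] at hx
  rw [syllableLength_of_mul] at hgx ⊢
  by_cases hhead : (factorPair d j x).head ∈ (φ j).range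
  · rw [if_neg (mt (Subgroup.mul_mem_cancel_right _ hhead).1 hg)] at hgx
    split_ifs <;> omega
  · rw [if_neg hhead] at hx
    split_ifs <;> omega

theorem mul_inv_mem_range_of_syllableLength_le {a b : G j}
    (ha : syllableLength d (of j a * x) ≤ n) (hb : syllableLength d (of j b * x) ≤ n)
    (hx : n < syllableLength d x) : a * b⁻¹ ∈ (φ j).range := by
  by_contra h
  have := syllableLength_of_mul_le_of_notMem_range h hb (by simpa [mul_assoc] using ha) b⁻¹
  exact hx.not_ge (by simpa using this)

variable (d n j)

/-- The union of the left `G j`-translates of the ball of radius `n` for the syllable length. -/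
def factorBall : Set (PushoutI φ) :=
  {x | ∃ a : G j, syllableLength d (of j a * x) ≤ n}

variable {d n j}

theorem mem_factorBall_of_le (hx : syllableLength d x ≤ n) : x ∈ factorBall d n j :=
  ⟨1, by simpa using hx⟩

theorem of_mul_mem_factorBall (hx : x ∈ factorBall d n j) (g : G j) :
    of j g * x ∈ factorBall d n j := by
  obtain ⟨a, ha⟩ := hx
  exact ⟨a * g⁻¹, by simpa [mul_assoc] using ha⟩

theorem syllableLength_le_of_mem_factorBall (hx : x ∈ factorBall d n j) :
    syllableLength d x ≤ n + 1 := by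
  obtain ⟨a, ha⟩ := hx
  simpa using (syllableLength_of_mul_le d j a⁻¹ (of j a * x)).trans (Nat.succ_le_succ ha)

theorem mem_factorBall_iff :
    x ∈ factorBall d n j ↔ (factorPair d j x).tail.toList.length ≤ n := by
  constructor
  · rintro ⟨a, ha⟩
    rw [syllableLength_of_mul] at ha
    omega
  · intro h
    exact ⟨(factorPair d j x).head⁻¹, by
      rwa [syllableLength_of_mul, inv_mul_cancel, if_pos (one_mem _), add_zero]⟩

theorem eq_of_mem_factorBall {k : ι} (hj : x ∈ factorBall d n j) (hk : x ∈ factorBall d n k)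
    (hx : n < syllableLength d x) : j = k := by
  classical
  have fstIdx_eq {i : ι} (hi : x ∈ factorBall d n i) :
      (NormalWord.equiv (d := d) x).fstIdx = some i := by
    rw [fstIdx_equiv_eq_some_iff]
    intro hhead
    rw [mem_factorBall_iff] at hi
    rw [syllableLength_eq d i, if_pos hhead] at hx
    omega
  exact Option.some_injective _ ((fstIdx_eq hj).symm.trans (fstIdx_eq hk))

theorem mem_range_or_mem_factorBall {g : G j} (hx : syllableLength d x ≤ n + 1)
    (hgx : syllableLength d (of j g * x) ≤ n + 1) :
    g ∈ (φ j).range ∨ x ∈ factorBall d n j := by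
  rw [syllableLength_eq d j] at hx
  rw [syllableLength_of_mul] at hgx
  rw [mem_factorBall_iff, or_iff_not_imp_right, not_le]
  intro hn
  have hhead : (factorPair d j x).head ∈ (φ j).range := by
    by_contra h
    rw [if_neg h] at hx
    omega
  rw [Subgroup.mul_mem_cancel_right _ hhead] at hgx
  by_contra hg
  rw [if_neg hg] at hgx
  omega

theorem exists_mem_factorBall [Nonempty ι] (hx : syllableLength d x ≤ n + 1) :
    ∃ j, x ∈ factorBall d n j := by
  classical
  cases hj : (NormalWord.equiv (d := d) x).fstIdx with
  | none =>
    have hnil : (NormalWord.equiv (d := d) x).toList = [] := by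
      simpa [CoprodI.Word.fstIdx] using hj
    exact ⟨Classical.arbitrary ι, mem_factorBall_of_le (by simp [syllableLength, hnil])⟩
  | some j =>
    rw [syllableLength_eq d j, if_neg ((fstIdx_equiv_eq_some_iff d j x).1 hj)] at hx
    exact ⟨j, mem_factorBall_iff.2 (by omega)⟩

end SyllableLength

section NormalSubsemigroup

variable {G : Type*} [Group G]

theorem IsNormalSubsemigroup.conj_mem {P : Set G} (hP : IsNormalSubsemigroup P) {x : G}
    (hx : x ∈ P) (g : G) : g * x * g⁻¹ ∈ P := by
  simpa using hP.2 x hx g⁻¹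

theorem IsNormalSubsemigroup.preimage {K : Type*} [Group K] {P : Set K}
    (hP : IsNormalSubsemigroup P) (f : G →* K) : IsNormalSubsemigroup (f ⁻¹' P) :=
  ⟨fun x hx y hy => by simpa using hP.1 _ hx _ hy, fun x hx g => by simpa using hP.2 _ hx (f g)⟩

theorem IsNormalSubsemigroup.insert_one {P : Set G} (hP : IsNormalSubsemigroup P) :
    IsNormalSubsemigroup (insert 1 P) := by
  constructor
  · rintro x (rfl | hx) y (rfl | hy)
    · simp
    · simpa using .inr hy
    · simpa using .inr hx
    · exact .inr (hP.1 x hx y hy)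
  · rintro x (rfl | hx) g
    · simp
    · exact .inr (hP.2 x hx g)

theorem isNormalSubsemigroup_nss (S : Set G) : IsNormalSubsemigroup (nss G S) := by
  constructor
  · rintro _ ⟨l, hl, hS, rfl⟩ _ ⟨l', -, hS', rfl⟩
    exact ⟨l ++ l', by simp [hl], fun p hp => (List.mem_append.1 hp).elim (hS p) (hS' p),
      by simp⟩
  · rintro _ ⟨l, hl, hS, rfl⟩ g
    refine ⟨l.map fun p => (p.1, p.2 * g), by simpa using hl, fun p hp => ?_, ?_⟩
    · obtain ⟨q, hq, rfl⟩ := List.mem_map.1 hp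
      exact hS q hq
    · have hconj := map_list_prod (MulAut.conj g⁻¹) (l.map fun p => p.2⁻¹ * p.1 * p.2)
      simpa [Function.comp_def, mul_assoc] using hconj.symm

theorem subset_nss (S : Set G) : S ⊆ nss G S :=
  fun x hx => ⟨[(x, 1)], by simp, by simpa using hx, by simp⟩

theorem exists_inv_mem_of_one_mem_nss {S : Set G} {N : Submonoid G}
    (hN : IsNormalSubsemigroup (N : Set G)) (hSN : S ⊆ N) (h : 1 ∈ nss G S) :
    ∃ s ∈ S, s⁻¹ ∈ N := by
  obtain ⟨_ | ⟨⟨s, g⟩, l⟩, hl, hS, hprod⟩ := h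
  · exact absurd rfl hl
  · rw [List.forall_mem_cons] at hS
    rw [List.map_cons, List.prod_cons] at hprod
    refine ⟨s, hS.1, ?_⟩
    have htail : (l.map fun p => p.2⁻¹ * p.1 * p.2).prod ∈ N := by
      refine N.list_prod_mem fun x hx => ?_
      obtain ⟨p, hp, rfl⟩ := List.mem_map.1 hx
      exact hN.2 p.1 (hSN (hS.2 p hp)) p.2
    have hinv : s⁻¹ = g * (l.map fun p => p.2⁻¹ * p.1 * p.2).prod * g⁻¹ := by
      rw [eq_inv_of_mul_eq_one_right hprod]
      group
    rw [hinv]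
    exact hN.conj_mem htail g

end NormalSubsemigroup

section Extension

variable {ι : Type*} {G : ι → Type*} [∀ i, Group (G i)] {H : Type*} [Group H]
  {φ : ∀ i, H →* G i}

/-- A family of normal submonoids of the factors of an amalgam with a common trace on the
amalgamated subgroup. Such a submonoid `Q j` is the positive cone of the bi-invariant preorder
`x ≤ y ↔ x⁻¹ * y ∈ Q j` on `G j`. -/
structure NormalSubmonoidFamily (φ : ∀ i, H →* G i) where
  carrier : ∀ j, Submonoid (G j)
  isNormal : ∀ j, IsNormalSubsemigroup (carrier j : Set (G j))
  compat : ∀ j k h, φ j h ∈ carrier j → φ k h ∈ carrier k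

namespace NormalSubmonoidFamily

/-- The family obtained from compatible normal subsemigroups by adjoining the identities. -/
def insertOne (hφ : ∀ i, Function.Injective (φ i)) {P : ∀ j, Set (G j)}
    (hP : ∀ j, IsNormalSubsemigroup (P j))
    (hcompat : ∀ j k h, φ j h ∈ P j ↔ φ k h ∈ P k) : NormalSubmonoidFamily φ where
  carrier j :=
    { carrier := insert 1 (P j)
      one_mem' := Set.mem_insert _ _
      mul_mem' := fun {x y} hx hy => (hP j).insert_one.1 x hx y hy }
  isNormal j := (hP j).insert_one
  compat j k h := Or.imp (fun h1 => by rw [(map_eq_one_iff _ (hφ j)).1 h1, map_one])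
    (hcompat j k h).1

variable (Q : NormalSubmonoidFamily φ)

/-- The relation on the union of the `G j`-translates of a set `B ⊆ PushoutI φ` induced by
a preorder `R` on `B`: the image of the product of the preorder of `G j` and `R` under
multiplication. It is not transitive in general. -/
def Induced (R : PushoutI φ → PushoutI φ → Prop) (j : ι) (x y : PushoutI φ) : Prop :=
  ∃ (g p : G j) (u v : PushoutI φ), p ∈ Q.carrier j ∧ R u v ∧
    x = of j g * u ∧ y = of j (g * p) * v

/-- The transitive relation generated by the relations induced from `R` by all factors. -/
def Extend (R : PushoutI φ → PushoutI φ → Prop) : PushoutI φ → PushoutI φ → Prop :=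
  TransGen fun x y => ∃ j, Q.Induced R j x y

/-- The preorder on the ball of radius `n` of the amalgam (for the syllable length) generated
by the preorders on the factors: on the amalgamated subgroup it has the common trace of the
`Q j` as its positive cone, and then it is extended from each ball to the next. -/
def BallLE : ℕ → PushoutI φ → PushoutI φ → Prop
  | 0, x, y => x ∈ (base φ).range ∧ ∃ q, (∀ j, φ j q ∈ Q.carrier j) ∧ y = x * base φ q
  | n + 1, x, y => Q.Extend (BallLE n) x y

/-- A transitive relation on the ball of radius `n` that is invariant under those left
multiplications by factor elements which stay in the ball, and for which left multiplication by
an element of `Q j` is increasing. -/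
structure IsBallPreorder (d : NormalWord.Transversal φ) (n : ℕ)
    (R : PushoutI φ → PushoutI φ → Prop) : Prop where
  trans : ∀ {x y z}, R x y → R y z → R x z
  length_left_le : ∀ {x y}, R x y → syllableLength d x ≤ n
  length_right_le : ∀ {x y}, R x y → syllableLength d y ≤ n
  rel_of_mul : ∀ {j} {p : G j} {x}, p ∈ Q.carrier j → syllableLength d x ≤ n →
    syllableLength d (of j p * x) ≤ n → R x (of j p * x)
  of_mul_rel_of_mul : ∀ {j} {g : G j} {x y}, R x y → syllableLength d (of j g * x) ≤ n →
    syllableLength d (of j g * y) ≤ n → R (of j g * x) (of j g * y)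

variable {Q} {d : NormalWord.Transversal φ} {n : ℕ} {R : PushoutI φ → PushoutI φ → Prop}
  {j k : ι} {x y z : PushoutI φ}

theorem Induced.of_mul (h : Q.Induced R j x y) (a : G j) :
    Q.Induced R j (of j a * x) (of j a * y) := by
  obtain ⟨g, p, u, v, hp, huv, rfl, rfl⟩ := h
  exact ⟨a * g, p, u, v, hp, huv, by simp [mul_assoc], by simp [mul_assoc]⟩

theorem induced_of_rel (h : R x y) (j : ι) : Q.Induced R j x y :=
  ⟨1, 1, x, y, one_mem _, h, by simp, by simp⟩

theorem extend_of_rel [Nonempty ι] (h : R x y) : Q.Extend R x y :=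
  .single ⟨Classical.arbitrary ι, induced_of_rel h _⟩

namespace IsBallPreorder

variable (hR : Q.IsBallPreorder d n R)

include hR

theorem refl [Nonempty ι] (hx : syllableLength d x ≤ n) : R x x := by
  have j := Classical.arbitrary ι
  simpa using hR.rel_of_mul (one_mem (Q.carrier j)) hx (by simpa using hx)

theorem left_mem_factorBall (h : Q.Induced R j x y) : x ∈ factorBall d n j := by
  obtain ⟨g, _, _, _, _, huv, rfl, _⟩ := h
  exact of_mul_mem_factorBall (mem_factorBall_of_le (hR.length_left_le huv)) g

theorem right_mem_factorBall (h : Q.Induced R j x y) : y ∈ factorBall d n j := by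
  obtain ⟨g, p, _, _, _, huv, _, rfl⟩ := h
  exact of_mul_mem_factorBall (mem_factorBall_of_le (hR.length_right_le huv)) (g * p)

theorem length_left_le_of_extend (h : Q.Extend R x y) : syllableLength d x ≤ n + 1 := by
  obtain ⟨_, ⟨_, hj⟩, _⟩ := TransGen.head'_iff.1 h
  exact syllableLength_le_of_mem_factorBall (hR.left_mem_factorBall hj)

theorem length_right_le_of_extend (h : Q.Extend R x y) : syllableLength d y ≤ n + 1 := by
  obtain ⟨_, _, ⟨_, hj⟩⟩ := TransGen.tail'_iff.1 h
  exact syllableLength_le_of_mem_factorBall (hR.right_mem_factorBall hj)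

theorem induced_of_mul [Nonempty ι] (hx : x ∈ factorBall d n j) {p : G j}
    (hp : p ∈ Q.carrier j) : Q.Induced R j x (of j p * x) := by
  obtain ⟨a, ha⟩ := hx
  exact ⟨a⁻¹, a * p * a⁻¹, of j a * x, of j a * x, (Q.isNormal j).conj_mem hp a, hR.refl ha,
    by simp, by simp [mul_assoc]⟩

theorem rel_of_induced (h : Q.Induced R j x y) (hx : syllableLength d x ≤ n)
    (hy : syllableLength d y ≤ n) : R x y := by
  obtain ⟨g, p, u, v, hp, huv, rfl, rfl⟩ := h
  have hgp : of (φ := φ) j (g * p) = of j (g * p * g⁻¹) * of j g := by simp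
  have hconj := (Q.isNormal j).conj_mem hp g
  -- Either `g * p * u` or `g * v` stays in the ball, so one of the factors moves first.
  have hball : syllableLength d (of j (g * p) * u) ≤ n ∨ syllableLength d (of j g * v) ≤ n := by
    by_cases hrange : g * p ∈ (φ j).range
    · obtain ⟨c, hc⟩ := hrange
      rw [← hc, syllableLength_of_map_mul]
      exact .inl (hR.length_left_le huv)
    · exact .inr (syllableLength_of_mul_le_of_notMem_range hrange (hR.length_right_le huv) hy g)
  rcases hball with hgpu | hgv
  · refine hR.trans ?_ (hR.of_mul_rel_of_mul huv hgpu hy)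
    rw [hgp, mul_assoc] at hgpu ⊢
    exact hR.rel_of_mul hconj hx hgpu
  · refine hR.trans (hR.of_mul_rel_of_mul huv hx hgv) ?_
    rw [hgp, mul_assoc] at hy ⊢
    exact hR.rel_of_mul hconj hgv hy

theorem induced_trans (hxy : Q.Induced R j x y) (hyz : Q.Induced R j y z)
    (hy : n < syllableLength d y) : Q.Induced R j x z := by
  obtain ⟨g, p, u, v, hp, huv, rfl, rfl⟩ := hxy
  obtain ⟨g', p', u', v', hp', huv', heq, rfl⟩ := hyz
  -- Outside the ball, the factor part of `y` is unique up to the amalgamated subgroup.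
  obtain ⟨c, hc⟩ := mul_inv_mem_range_of_syllableLength_le (a := (g * p)⁻¹) (b := g'⁻¹)
    (by simpa [mul_assoc] using hR.length_right_le huv)
    (by rw [heq]; simpa using hR.length_left_le huv') hy
  have hg' : g' = g * p * φ j c := by rw [hc]; group
  have hv : v = of j (φ j c) * u' := by
    rw [hg', map_mul _ (g * p), mul_assoc] at heq
    exact mul_left_cancel heq
  refine ⟨g, p * (φ j c * p' * (φ j c)⁻¹), u, of j (φ j c) * v',
    mul_mem hp ((Q.isNormal j).conj_mem hp' _), hR.trans huv ?_, rfl, ?_⟩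
  · rw [hv]
    exact hR.of_mul_rel_of_mul huv'
      ((syllableLength_of_map_mul d j c u').trans_le (hR.length_left_le huv'))
      ((syllableLength_of_map_mul d j c v').trans_le (hR.length_right_le huv'))
  · rw [hg']
    simp [mul_assoc]

theorem rel_of_extend [Nonempty ι] (h : Q.Extend R x y) (hx : syllableLength d x ≤ n)
    (hy : syllableLength d y ≤ n) : R x y := by
  refine rel_of_transGen_of_trans_off (B := {x | syllableLength d x ≤ n}) ?_ ?_
    (fun _ => hR.refl) (fun _ _ _ => hR.trans) h hx hy
  · rintro x y z hy ⟨j, hxy⟩ ⟨k, hyz⟩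
    obtain rfl := eq_of_mem_factorBall (hR.right_mem_factorBall hxy)
      (hR.left_mem_factorBall hyz) (not_le.1 hy)
    exact ⟨j, hR.induced_trans hxy hyz (not_le.1 hy)⟩
  · rintro x y hx hy ⟨j, hxy⟩
    exact hR.rel_of_induced hxy hx hy

theorem transGen_induced_of_extend [Nonempty ι] (h : Q.Extend R x y)
    (hx : x ∈ factorBall d n j) (hy : y ∈ factorBall d n j) :
    TransGen (Q.Induced R j) x y := by
  refine rel_of_transGen_exists (r := fun i => TransGen (Q.Induced R i))
    (B := {x | syllableLength d x ≤ n}) (S := factorBall d n) (fun _ _ _ _ => TransGen.trans)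
    ?_ ?_ ?_ ?_ (TransGen.mono (fun _ _ ⟨i, hi⟩ => ⟨i, .single hi⟩) _ _ h) hx hy
  · intro i x y h
    obtain ⟨_, hstep, _⟩ := TransGen.head'_iff.1 h
    exact hR.left_mem_factorBall hstep
  · intro i x y h
    obtain ⟨_, _, hstep⟩ := TransGen.tail'_iff.1 h
    exact hR.right_mem_factorBall hstep
  · intro i k x hik hi hk
    by_contra hx
    exact hik (eq_of_mem_factorBall hi hk (not_le.1 hx))
  · intro i k x y hx hy h
    have hextend : Q.Extend R x y := TransGen.mono (fun _ _ hi => ⟨i, hi⟩) _ _ h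
    exact .single (induced_of_rel (hR.rel_of_extend hextend hx hy) k)

theorem extend_of_mul [Nonempty ι] {p : G j} (hp : p ∈ Q.carrier j)
    (hx : syllableLength d x ≤ n + 1) (hpx : syllableLength d (of j p * x) ≤ n + 1) :
    Q.Extend R x (of j p * x) := by
  rcases mem_range_or_mem_factorBall hx hpx with ⟨c, rfl⟩ | hxj
  · obtain ⟨k, hxk⟩ := exists_mem_factorBall hx
    rw [of_apply_eq_base, ← of_apply_eq_base φ k]
    exact .single ⟨k, hR.induced_of_mul hxk (Q.compat j k c hp)⟩
  · exact .single ⟨j, hR.induced_of_mul hxj hp⟩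

theorem of_mul_extend_of_mul [Nonempty ι] {g : G j} (h : Q.Extend R x y)
    (hgx : syllableLength d (of j g * x) ≤ n + 1)
    (hgy : syllableLength d (of j g * y) ≤ n + 1) :
    Q.Extend R (of j g * x) (of j g * y) := by
  by_cases hg : g ∈ (φ j).range
  · obtain ⟨c, rfl⟩ := hg
    refine TransGen.lift (of j (φ j c) * ·) (fun a b ⟨k, hab⟩ => ⟨k, ?_⟩) _ _ h
    simp only [of_apply_eq_base]
    rw [← of_apply_eq_base φ k]
    exact hab.of_mul _
  · have hx := (mem_range_or_mem_factorBall (hR.length_left_le_of_extend h) hgx).resolve_left hg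
    have hy := (mem_range_or_mem_factorBall (hR.length_right_le_of_extend h) hgy).resolve_left hg
    exact TransGen.lift (of j g * ·) (fun a b hab => ⟨j, hab.of_mul g⟩) _ _
      (hR.transGen_induced_of_extend h hx hy)

theorem extend [Nonempty ι] : Q.IsBallPreorder d (n + 1) (Q.Extend R) where
  trans := TransGen.trans
  length_left_le := hR.length_left_le_of_extend
  length_right_le := hR.length_right_le_of_extend
  rel_of_mul := hR.extend_of_mul
  of_mul_rel_of_mul := hR.of_mul_extend_of_mul

end IsBallPreorder

theorem isBallPreorder_ballLE_zero (Q : NormalSubmonoidFamily φ)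
    (d : NormalWord.Transversal φ) : Q.IsBallPreorder d 0 (Q.BallLE 0) where
  trans := by
    rintro x _ _ ⟨hx, q, hq, rfl⟩ ⟨-, q', hq', rfl⟩
    refine ⟨hx, q * q', fun j => ?_, by simp [mul_assoc]⟩
    rw [map_mul]
    exact mul_mem (hq j) (hq' j)
  length_left_le h := ((syllableLength_eq_zero_iff d _).2 h.1).le
  length_right_le := by
    rintro x _ ⟨hx, q, -, rfl⟩
    exact ((syllableLength_eq_zero_iff d _).2 (mul_mem hx ⟨q, rfl⟩)).le
  rel_of_mul {j p x} hp hx hpx := by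
    obtain ⟨c, rfl⟩ := (syllableLength_eq_zero_iff d x).1 (Nat.le_zero.1 hx)
    obtain ⟨e, he⟩ := (syllableLength_eq_zero_iff d _).1 (Nat.le_zero.1 hpx)
    have hpe : p * φ j c = φ j e := by
      apply of_injective d.injective j
      simp only [map_mul, of_apply_eq_base, he]
    refine ⟨⟨c, rfl⟩, c⁻¹ * e, fun k => Q.compat j k _ ?_, by simp [he]⟩
    rw [map_mul, ← hpe, map_inv, ← mul_assoc]
    exact (Q.isNormal j).2 p hp (φ j c)
  of_mul_rel_of_mul := by
    rintro j g x _ ⟨-, q, hq, rfl⟩ hgx -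
    exact ⟨(syllableLength_eq_zero_iff d _).1 (Nat.le_zero.1 hgx), q, hq,
      (mul_assoc _ _ _).symm⟩

variable [Nonempty ι]

theorem isBallPreorder_ballLE (Q : NormalSubmonoidFamily φ) (d : NormalWord.Transversal φ) :
    ∀ n, Q.IsBallPreorder d n (Q.BallLE n)
  | 0 => Q.isBallPreorder_ballLE_zero d
  | n + 1 => (Q.isBallPreorder_ballLE d n).extend

theorem BallLE.mono {m : ℕ} (hmn : m ≤ n) (h : Q.BallLE m x y) : Q.BallLE n x y := by
  induction hmn with
  | refl => exact h
  | step _ ih => exact extend_of_rel ih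

theorem BallLE.restrict (d : NormalWord.Transversal φ) {m : ℕ} (hmn : m ≤ n)
    (h : Q.BallLE n x y) (hx : syllableLength d x ≤ m) (hy : syllableLength d y ≤ m) :
    Q.BallLE m x y := by
  induction hmn with
  | refl => exact h
  | step hmn ih =>
    exact ih ((Q.isBallPreorder_ballLE d _).rel_of_extend h (hx.trans hmn) (hy.trans hmn))

omit [Nonempty ι] in
theorem exists_eq_of_induced_ballLE_zero (hφ : Function.Injective (of (φ := φ) j)) {a : G j}
    (h : Q.Induced (Q.BallLE 0) j (of j a) y) : ∃ p ∈ Q.carrier j, y = of j (a * p) := by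
  obtain ⟨g, p, _, _, hp, ⟨⟨c, rfl⟩, q, hq, rfl⟩, ha, rfl⟩ := h
  have hag : a = g * φ j c := hφ (by rw [ha, map_mul, of_apply_eq_base])
  refine ⟨(φ j c)⁻¹ * p * φ j c * φ j q, mul_mem ((Q.isNormal j).2 p hp _) (hq j), ?_⟩
  rw [hag]
  simp [mul_assoc, of_apply_eq_base]

theorem mem_of_ballLE_one_of (hφ : ∀ i, Function.Injective (φ i)) {p : G j}
    (h : Q.BallLE n 1 (of j p)) : p ∈ Q.carrier j := by
  obtain ⟨d⟩ := NormalWord.transversal_nonempty φ hφ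
  have hball := Q.isBallPreorder_ballLE d 0
  have hone : (1 : PushoutI φ) ∈ factorBall d 0 j :=
    mem_factorBall_of_le (syllableLength_one d).le
  have hp : of j p ∈ factorBall d 0 j := by simpa using of_mul_mem_factorBall hone p
  have hle : Q.BallLE 1 1 (of j p) := (h.mono n.le_succ).restrict d n.succ_pos
    (syllableLength_le_of_mem_factorBall hone) (syllableLength_le_of_mem_factorBall hp)
  have hchain : ∀ y, TransGen (Q.Induced (Q.BallLE 0) j) 1 y →
      ∃ q ∈ Q.carrier j, y = of j q := by
    intro y hy
    have hinj := of_injective hφ j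
    induction hy with
    | single hstep =>
      rw [← map_one (of j)] at hstep
      simpa using exists_eq_of_induced_ballLE_zero hinj hstep
    | tail _ hstep ih =>
      obtain ⟨q, hq, rfl⟩ := ih
      obtain ⟨q', hq', rfl⟩ := exists_eq_of_induced_ballLE_zero hinj hstep
      exact ⟨q * q', mul_mem hq hq', rfl⟩
  obtain ⟨q, hq, hpq⟩ := hchain _ (hball.transGen_induced_of_extend hle hone hp)
  rwa [of_injective hφ j hpq]

omit [Nonempty ι] in
variable (Q) in
/-- The preorder on the whole amalgam generated by the preorders on the factors. -/
def AmalgamLE (x y : PushoutI φ) : Prop :=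
  ∃ n, Q.BallLE n x y

theorem AmalgamLE.trans (hφ : ∀ i, Function.Injective (φ i)) (hxy : Q.AmalgamLE x y)
    (hyz : Q.AmalgamLE y z) : Q.AmalgamLE x z := by
  obtain ⟨d⟩ := NormalWord.transversal_nonempty φ hφ
  obtain ⟨m, hm⟩ := hxy
  obtain ⟨n, hn⟩ := hyz
  exact ⟨max m n, (Q.isBallPreorder_ballLE d _).trans (hm.mono (le_max_left m n))
    (hn.mono (le_max_right m n))⟩

theorem amalgamLE_of_mul (hφ : ∀ i, Function.Injective (φ i)) {p : G j}
    (hp : p ∈ Q.carrier j) (x : PushoutI φ) : Q.AmalgamLE x (of j p * x) := by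
  obtain ⟨d⟩ := NormalWord.transversal_nonempty φ hφ
  exact ⟨syllableLength d x + 1, (Q.isBallPreorder_ballLE d _).rel_of_mul hp
    (Nat.le_succ _) (syllableLength_of_mul_le d j p x)⟩

theorem AmalgamLE.of_mul (hφ : ∀ i, Function.Injective (φ i)) (hxy : Q.AmalgamLE x y)
    (g : G j) : Q.AmalgamLE (of j g * x) (of j g * y) := by
  obtain ⟨d⟩ := NormalWord.transversal_nonempty φ hφ
  obtain ⟨n, hn⟩ := hxy
  have hball := Q.isBallPreorder_ballLE d n
  exact ⟨n + 1, hball.extend.of_mul_rel_of_mul (extend_of_rel hn)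
    ((syllableLength_of_mul_le d j g x).trans (Nat.succ_le_succ (hball.length_left_le hn)))
    ((syllableLength_of_mul_le d j g y).trans (Nat.succ_le_succ (hball.length_right_le hn)))⟩

theorem AmalgamLE.mul_left (hφ : ∀ i, Function.Injective (φ i)) (hxy : Q.AmalgamLE x y)
    (g : PushoutI φ) : Q.AmalgamLE (g * x) (g * y) := by
  induction g using PushoutI.induction_on generalizing x y with
  | of j a => exact hxy.of_mul hφ a
  | base h =>
    rw [← of_apply_eq_base φ (Classical.arbitrary ι)]
    exact hxy.of_mul hφ _
  | mul a b iha ihb =>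
    rw [mul_assoc, mul_assoc]
    exact iha (ihb hxy)

variable (Q)

/-- The elements of the amalgam that increase every element for the generated preorder when
multiplying from the left. -/
def amalgam (hφ : ∀ i, Function.Injective (φ i)) : Submonoid (PushoutI φ) where
  carrier := {x | ∀ y, Q.AmalgamLE y (x * y)}
  one_mem' y := by
    simpa using amalgamLE_of_mul hφ (one_mem (Q.carrier (Classical.arbitrary ι))) y
  mul_mem' {a b} ha hb y := by
    simpa [mul_assoc] using (hb y).trans hφ (ha (b * y))

theorem isNormalSubsemigroup_amalgam (hφ : ∀ i, Function.Injective (φ i)) :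
    IsNormalSubsemigroup (Q.amalgam hφ : Set (PushoutI φ)) := by
  refine ⟨fun x hx y hy => mul_mem hx hy, fun x hx g y => ?_⟩
  simpa [mul_assoc] using (hx (g * y)).mul_left hφ g⁻¹

theorem of_mem_amalgam_iff (hφ : ∀ i, Function.Injective (φ i)) {p : G j} :
    of j p ∈ Q.amalgam hφ ↔ p ∈ Q.carrier j := by
  refine ⟨fun hp => ?_, amalgamLE_of_mul hφ⟩
  obtain ⟨n, hn⟩ := hp 1
  rw [mul_one] at hn
  exact mem_of_ballLE_one_of hφ hn

end NormalSubmonoidFamily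

end Extension

/-- For `R ⊆ G i₀ \ {1}` in an amalgam `G = *_C G i`: `1 ∉ NSS_G(R)` iff there are
normal subsemigroups `P j ⊆ G j` with `R ⊆ P i₀`, `1 ∉ P i₀`, and
`P j ∩ C = P j' ∩ C` for all `j, j'`. -/
theorem one_notMem_nss_iff {ι : Type*} {G : ι → Type*} [∀ i, Group (G i)]
    {H : Type*} [Group H] (φ : ∀ i, H →* G i) (hφ : ∀ i, Function.Injective (φ i))
    (i₀ : ι) (R : Set (G i₀)) (hR : (1 : G i₀) ∉ R) :
    (1 : Monoid.PushoutI φ) ∉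
        nss (Monoid.PushoutI φ) (Monoid.PushoutI.of (φ := φ) i₀ '' R) ↔
      ∃ P : ∀ j, Set (G j), (∀ j, IsNormalSubsemigroup (P j)) ∧
        R ⊆ P i₀ ∧ (1 : G i₀) ∉ P i₀ ∧
        ∀ j j' (h : H), φ j h ∈ P j ↔ φ j' h ∈ P j' := by
  have : Nonempty ι := ⟨i₀⟩
  constructor
  · intro h
    refine ⟨fun j => of (φ := φ) j ⁻¹' nss (PushoutI φ) (of (φ := φ) i₀ '' R),
      fun j => (isNormalSubsemigroup_nss _).preimage (of (φ := φ) j),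
      fun r hr => subset_nss _ ⟨r, hr, rfl⟩, by simpa using h, fun j j' c => ?_⟩
    simp only [Set.mem_preimage, of_apply_eq_base]
  · rintro ⟨P, hP, hRP, h1, hcompat⟩ hone
    let Q := NormalSubmonoidFamily.insertOne hφ hP hcompat
    have hRQ : of (φ := φ) i₀ '' R ⊆ (Q.amalgam hφ : Set (PushoutI φ)) := by
      rintro _ ⟨r, hr, rfl⟩
      exact (Q.of_mem_amalgam_iff hφ).2 (.inr (hRP hr))
    obtain ⟨_, ⟨r, hr, rfl⟩, hinv⟩ :=
      exists_inv_mem_of_one_mem_nss (Q.isNormalSubsemigroup_amalgam hφ) hRQ hone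
    rw [← map_inv, Q.of_mem_amalgam_iff hφ] at hinv
    rcases hinv with hinv | hinv
    · exact hR (inv_eq_one.1 hinv ▸ hr)
    · exact h1 (mul_inv_cancel r ▸ (hP i₀).1 r (hRP hr) _ hinv)
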